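/- arXiv:2208.09755 — 2 statements merged into one kernel-verified Lean document; each statement's English description precedes it below -/
import Mathlib

section
/- Let T > 0, Q_T = (0,∞)×(0,T), and let n be a nonnegative solution of the Kompaneets equation on Q_T that is bounded on Q_T, with initial data n₀ satisfying x² n₀(x) → 0 as x → ∞. Then for every x ∈ (0,∞), every t ∈ (0,T], and every α ≥ √(6‖n‖_{L∞(Q_T)} + 1) − 1, one has ∂ₓ n(x,t) ≥ −1/(2t) − 5x/2 − α/2 (Oleinik-type one-sided slope bound). -/
open MeasureTheory Filter Set Real Topology

/-- The Kompaneets photon flux `J(x,u) = x² u'(x) + (x² - 2x) u(x) + u(x)²`. -/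
noncomputable def kompFlux (u : ℝ → ℝ) (x : ℝ) : ℝ :=
  x ^ 2 * deriv u x + (x ^ 2 - 2 * x) * u x + u x ^ 2

/-- A nonnegative solution of the Kompaneets equation
`∂ₜ n = ∂ₓ J(x, n(·,t))` on `Q_T = (0,∞) × (0,T)` (conditions stated for
`0 < t ≤ T`) with initial data `n₀`; no boundary condition at `x = 0`. -/
structure IsKompSolOn (n : ℝ → ℝ → ℝ) (n₀ : ℝ → ℝ) (T : ℝ) : Prop where
  nonneg : ∀ x t : ℝ, 0 < x → 0 < t → t ≤ T → 0 ≤ n x t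
  init : ∀ x : ℝ, 0 < x → n x 0 = n₀ x
  contOn : ContinuousOn (fun p : ℝ × ℝ => n p.1 p.2)
    ((Set.Ioi (0:ℝ)) ×ˢ (Set.Ioc (0:ℝ) T))
  diff_x : ∀ t : ℝ, 0 < t → t ≤ T → ∀ x : ℝ, 0 < x →
    DifferentiableAt ℝ (fun y => n y t) x
  diff_xx : ∀ t : ℝ, 0 < t → t ≤ T → ∀ x : ℝ, 0 < x →
    DifferentiableAt ℝ (deriv (fun y => n y t)) x
  diff_t : ∀ x : ℝ, 0 < x → ∀ t : ℝ, 0 < t → t ≤ T →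
    DifferentiableAt ℝ (fun τ => n x τ) t
  pde : ∀ x : ℝ, 0 < x → ∀ t : ℝ, 0 < t → t ≤ T →
    deriv (fun τ => n x τ) t = deriv (fun y => kompFlux (fun z => n z t) y) x
  l1init : Filter.Tendsto (fun t => ∫ x in Set.Ioi (0:ℝ), |n x t - n₀ x|)
    (𝓝[>] (0:ℝ)) (nhds 0)
  decay : ∀ ε : ℝ, 0 < ε → ∃ R : ℝ, 0 < R ∧
    ∀ x : ℝ, R ≤ x → ∀ t : ℝ, 0 ≤ t → t ≤ T → x ^ 2 * n x t < ε
  decay' : ∀ ε : ℝ, 0 < ε → ∃ R : ℝ, 0 < R ∧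
    ∀ x : ℝ, R ≤ x → ∀ t : ℝ, 1 / x ^ 2 ≤ t → t ≤ T →
      |x ^ 2 * deriv (fun y => n y t) x| < ε

/-!
The slope bound says that `n + Φ` is nondecreasing in `x`, where `∂ₓΦ = 1/(2t) + 5x/2 + α/2`; the
negative of this slope is a subsolution of the equation satisfied by `∂ₓ n`, which is where
`(α + 1)² ≥ 6M + 1` enters. Since only `n`, and not `∂ₓ n`, is known to be jointly continuous, the
minimum principle is applied to the two-point function `(n + Φ)(y,t) - (n + Φ)(x,t)`, `x ≤ y`,
instead of to `∂ₓ n`.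

A negative minimum must be kept away from the boundary. Translating time makes `n` continuous up
to `t = 0`, so that `1/(2t)` dominates there. At `x = 0`, where nothing is known about `n`, a
singular term `κδ²/(x-δ)²` is added to `∂ₓΦ` on `x > δ`. At infinity the decay of `n` and the term
`5x/2` suffice, and near the diagonal the uniform continuity of `n` does.

At an interior minimum the first derivatives of `u = n + Φ` vanish at both points and the second
derivatives have the favourable signs, so that the equation, written for `u` with a zeroth-order
term `F(u,x)`, bounds the time derivative of the two-point function from below by
`F(u(y),y) - F(u(x),x)`. This is positive, because `F` is nondecreasing in `x` for the relevant
values, strictly decreasing in `u`, and `u(y) < u(x)`; but at a minimum the time derivative cannot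
be positive.
-/

lemma deriv_deriv_nonneg_of_isLocalMin {f : ℝ → ℝ} {x : ℝ} (hmin : IsLocalMin f x)
    (hf : ContinuousAt f x) : 0 ≤ deriv (deriv f) x := by
  by_contra! hneg
  have hmax : IsLocalMax f x := isLocalMax_of_deriv_deriv_neg hneg hmin.deriv_eq_zero hf
  have hconst : f =ᶠ[𝓝 x] fun _ => f x := by
    filter_upwards [hmin, hmax] with z hle hge using le_antisymm hge hle
  have hzero : deriv (deriv f) x = 0 := by simp [hconst.deriv.deriv_eq]
  exact hneg.ne hzero

lemma deriv_deriv_nonpos_of_isLocalMax {f : ℝ → ℝ} {x : ℝ} (hmax : IsLocalMax f x)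
    (hf : ContinuousAt f x) : deriv (deriv f) x ≤ 0 := by
  have hneg := deriv_deriv_nonneg_of_isLocalMin hmax.neg hf.neg
  simpa using hneg

lemma nonpos_of_isLocalMinOn_Iic {f : ℝ → ℝ} {f' x : ℝ} (hmin : IsLocalMinOn f (Iic x) x)
    (hf : HasDerivWithinAt f f' (Iic x) x) : f' ≤ 0 := by
  have hleft : (-1 : ℝ) ∈ posTangentConeAt (Iic x) x := by
    refine mem_posTangentConeAt_of_segment_subset ?_
    rw [segment_symm, segment_eq_Icc (by linarith)]
    exact Icc_subset_Iic_self
  simpa using hmin.hasFDerivWithinAt_nonneg hf.hasFDerivWithinAt hleft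

/-! ### The barrier -/

/-- The potential `Φ` whose sum with a solution is shown to be nondecreasing in `z`; `τ` is the
time. The last term is a Keller–Osserman barrier at `z = δ`, of a size that vanishes as `δ → 0`;
the potential is meant for `z > δ` only. -/
noncomputable def barrier (κ δ α τ z : ℝ) : ℝ :=
  z / (2 * τ) + 5 * z ^ 2 / 4 + α * z / 2 - κ * δ ^ 2 / (z - δ)

/-- The space derivative `∂Φ/∂z` of `barrier`, that is, the slope allowed to a solution. -/
noncomputable def barrierSlope (κ δ α τ z : ℝ) : ℝ :=
  1 / (2 * τ) + 5 * z / 2 + α / 2 + κ * δ ^ 2 / (z - δ) ^ 2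

/-- The second space derivative `∂²Φ/∂z²` of `barrier`. -/
noncomputable def barrierCurvature (κ δ z : ℝ) : ℝ :=
  5 / 2 - 2 * (κ * δ ^ 2) / (z - δ) ^ 3

/-- The zeroth-order term in the equation for `u = n + Φ`, as a function of the value `V` of `u`;
see `IsVanishingKompSol.hasDerivWithinAt_compensated_time`. -/
noncomputable def forcing (κ δ α τ V z : ℝ) : ℝ :=
  -z / (2 * τ ^ 2) - z ^ 2 * barrierCurvature κ δ z
    - (z ^ 2 + 2 * (V - barrier κ δ α τ z)) * barrierSlope κ δ α τ z
    + (2 * z - 2) * (V - barrier κ δ α τ z)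

/-- The excess with which the negative of `s = barrierSlope` is a subsolution of the equation
`vₜ = z² v'' + (z² + 2 z + 2 N) v' + 2 v² + (4 z - 2) v + 2 N` of the slope `v` of a solution
with value `N`. -/
noncomputable def slopeExcess (κ δ α τ N z : ℝ) : ℝ :=
  -1 / (2 * τ ^ 2) - z ^ 2 * (6 * (κ * δ ^ 2) / (z - δ) ^ 4)
    - (z ^ 2 + 2 * z + 2 * N) * barrierCurvature κ δ z
    + 2 * barrierSlope κ δ α τ z ^ 2 - (4 * z - 2) * barrierSlope κ δ α τ z + 2 * N

section Barrier

variable {κ δ α τ z : ℝ}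

lemma hasDerivAt_barrier (hz : δ < z) :
    HasDerivAt (barrier κ δ α τ) (barrierSlope κ δ α τ z) z := by
  have hzδ : z - δ ≠ 0 := (sub_pos.2 hz).ne'
  have hpoly := (((hasDerivAt_id z).div_const (2 * τ)).add
    ((((hasDerivAt_id z).pow 2).const_mul 5).div_const 4)).add
    (((hasDerivAt_id z).const_mul α).div_const 2)
  refine (hpoly.sub ((hasDerivAt_const z (κ * δ ^ 2)).div
    ((hasDerivAt_id z).sub_const δ) hzδ)).congr_deriv ?_
  simp only [barrierSlope, id]
  field_simp
  ring

lemma hasDerivAt_barrierSlope (hz : δ < z) :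
    HasDerivAt (barrierSlope κ δ α τ) (barrierCurvature κ δ z) z := by
  have hzδ : z - δ ≠ 0 := (sub_pos.2 hz).ne'
  have haffine := ((((hasDerivAt_id z).const_mul 5).div_const 2).const_add
    (1 / (2 * τ))).add_const (α / 2)
  refine (haffine.add ((hasDerivAt_const z (κ * δ ^ 2)).div
    (((hasDerivAt_id z).sub_const δ).pow 2) (pow_ne_zero 2 hzδ))).congr_deriv ?_
  simp only [barrierCurvature, id, Pi.pow_apply]
  field_simp
  ring

lemma hasDerivAt_barrierCurvature (hz : δ < z) :
    HasDerivAt (barrierCurvature κ δ) (6 * (κ * δ ^ 2) / (z - δ) ^ 4) z := by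
  have hzδ : z - δ ≠ 0 := (sub_pos.2 hz).ne'
  refine (((hasDerivAt_const z (2 * (κ * δ ^ 2))).div (((hasDerivAt_id z).sub_const δ).pow 3)
    (pow_ne_zero 3 hzδ)).const_sub (5 / 2)).congr_deriv ?_
  simp only [id, Pi.pow_apply]
  field_simp
  ring

lemma hasDerivAt_barrier_time (hτ : τ ≠ 0) :
    HasDerivAt (fun s => barrier κ δ α s z) (-z / (2 * τ ^ 2)) τ := by
  have hmain := (hasDerivAt_const τ z).div ((hasDerivAt_id τ).const_mul 2)
    (mul_ne_zero two_ne_zero hτ)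
  refine (((hmain.add_const (5 * z ^ 2 / 4)).add_const (α * z / 2)).sub_const
    (κ * δ ^ 2 / (z - δ))).congr_deriv ?_
  simp only [id]
  field_simp
  ring

lemma hasDerivAt_forcing {V : ℝ} (hz : δ < z) :
    HasDerivAt (forcing κ δ α τ V) (slopeExcess κ δ α τ (V - barrier κ δ α τ z) z) z := by
  have hsq : HasDerivAt (fun z : ℝ => z ^ 2) (2 * z) z := by
    simpa using hasDerivAt_pow 2 z
  have hlin : HasDerivAt (fun z : ℝ => 2 * z - 2) 2 z := by
    simpa using ((hasDerivAt_id z).const_mul 2).sub_const 2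
  have hvalue : HasDerivAt (fun z => V - barrier κ δ α τ z) (-barrierSlope κ δ α τ z) z :=
    (hasDerivAt_barrier hz).const_sub V
  have hdiv := (hasDerivAt_id z).neg.div_const (2 * τ ^ 2)
  refine (((hdiv.sub (hsq.mul (hasDerivAt_barrierCurvature hz))).sub
    ((hsq.add (hvalue.const_mul 2)).mul (hasDerivAt_barrierSlope hz))).add
    (hlin.mul hvalue)).congr_deriv ?_
  simp only [slopeExcess, Pi.add_apply]
  ring

lemma barrier_sub_barrier {x y : ℝ} (hx : δ < x) (hy : δ < y) :
    barrier κ δ α τ y - barrier κ δ α τ x =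
      (y - x) * (1 / (2 * τ) + 5 * (x + y) / 4 + α / 2 + κ * δ ^ 2 / ((x - δ) * (y - δ))) := by
  have hxδ : x - δ ≠ 0 := (sub_pos.2 hx).ne'
  have hyδ : y - δ ≠ 0 := (sub_pos.2 hy).ne'
  have hsing : κ * δ ^ 2 / (x - δ) - κ * δ ^ 2 / (y - δ) =
      (y - x) * (κ * δ ^ 2 / ((x - δ) * (y - δ))) := by
    field_simp
    ring
  unfold barrier
  linear_combination hsing

lemma monotoneOn_barrier (hκ : 0 ≤ κ) (hδ : 0 ≤ δ) (hα : 0 ≤ α) (hτ : 0 ≤ τ) :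
    MonotoneOn (barrier κ δ α τ) (Ioi δ) := by
  intro x hx y hy hxy
  have hx0 : 0 < x := hδ.trans_lt hx
  have hxδ : 0 < x - δ := sub_pos.2 hx
  have hyδ : 0 < y - δ := sub_pos.2 hy
  have : 0 ≤ y - x := sub_nonneg.2 hxy
  rw [← sub_nonneg, barrier_sub_barrier hx hy]
  have hy0 : 0 < y := hx0.trans_le hxy
  positivity

lemma continuousOn_barrier :
    ContinuousOn (fun p : ℝ × ℝ => barrier κ δ α p.2 p.1) (Ioi δ ×ˢ Ioi 0) := by
  rintro ⟨z, τ⟩ ⟨hz, hτ⟩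
  have hzδ : z - δ ≠ 0 := (sub_pos.2 hz).ne'
  have hτ' : 2 * τ ≠ 0 := (mul_pos two_pos hτ).ne'
  unfold barrier
  fun_prop (disch := assumption)

lemma tendsto_barrierSlope (hz : z ≠ 0) (hτ : τ ≠ 0) :
    Tendsto (fun r => barrierSlope κ r α (τ - r) z) (𝓝 0)
      (𝓝 (1 / (2 * τ) + 5 * z / 2 + α / 2)) := by
  have hτ' : 2 * (τ - 0) ≠ 0 := by simpa using hτ
  have hz' : (z - 0) ^ 2 ≠ 0 := by simpa using hz
  have hcont : ContinuousAt (fun r => barrierSlope κ r α (τ - r) z) 0 := by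
    unfold barrierSlope
    fun_prop (disch := assumption)
  simpa [barrierSlope] using hcont.tendsto

lemma slopeExcess_nonneg {N : ℝ} (hκ : 3 + 4 * τ ≤ κ) (hδ : 0 < δ) (hα : 0 ≤ α) (hτ : 0 < τ)
    (hz : δ < z) (hN : 0 ≤ N) (hNα : 6 * N ≤ α ^ 2 + 2 * α) :
    0 ≤ slopeExcess κ δ α τ N z := by
  have hκ0 : 0 < κ := by linarith
  have hz0 : 0 < z := hδ.trans hz
  have hzδ : 0 < z - δ := sub_pos.2 hz
  set r := δ / (z - δ) with hr
  have : 0 < r := div_pos hδ hzδ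
  -- The shift of the singularity to `δ` produces `-8 κ r³`; time and the size of `κ` absorb it.
  have hsquare : 0 ≤ 2 / τ + 2 * (κ - 3) * r ^ 2 - 8 * r := by
    calc 0 ≤ 2 / τ * (1 - 2 * τ * r) ^ 2 + 2 * (κ - 3 - 4 * τ) * r ^ 2 := by
          have : 0 ≤ κ - 3 - 4 * τ := by linarith
          positivity
      _ = 2 / τ + 2 * (κ - 3) * r ^ 2 - 8 * r := by field_simp; ring
  have hexpand : slopeExcess κ δ α τ N z =
      (3 * z + α + 1) / τ + 3 * α * z + (α ^ 2 + 2 * α - 6 * N) / 2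
        + 2 * κ * r ^ 3 * (z ^ 2 + 2 * N) / δ
        + κ * r ^ 2 * (6 * z + 2 * α + (2 / τ + 2 * (κ - 3) * r ^ 2 - 8 * r)) := by
    simp only [slopeExcess, barrierSlope, barrierCurvature, hr]
    field_simp
    ring
  have : 0 ≤ α ^ 2 + 2 * α - 6 * N := by linarith
  rw [hexpand]
  positivity

lemma forcing_le_forcing {V x y : ℝ} (hκ : 3 + 4 * τ ≤ κ) (hδ : 0 < δ) (hα : 0 ≤ α)
    (hτ : 0 < τ) (hx : δ < x) (hxy : x ≤ y)
    (hVx : 6 * (V - barrier κ δ α τ x) ≤ α ^ 2 + 2 * α) (hVy : barrier κ δ α τ y ≤ V) :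
    forcing κ δ α τ V x ≤ forcing κ δ α τ V y := by
  have hδz : ∀ z ∈ Icc x y, δ < z := fun z hz => hx.trans_le hz.1
  have hbarrier : MonotoneOn (barrier κ δ α τ) (Ioi δ) :=
    monotoneOn_barrier (by linarith) hδ.le hα hτ.le
  have hmono : MonotoneOn (forcing κ δ α τ V) (Icc x y) := by
    refine monotoneOn_of_hasDerivWithinAt_nonneg (convex_Icc x y)
      (fun z hz => (hasDerivAt_forcing (hδz z hz)).continuousAt.continuousWithinAt)
      (fun z hz => (hasDerivAt_forcing (hδz z (interior_subset hz))).hasDerivWithinAt)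
      fun z hz => ?_
    have hz' := interior_subset hz
    have hlow := hbarrier hx (hδz z hz') hz'.1
    have hhigh := hbarrier (hδz z hz') (hx.trans_le hxy) hz'.2
    exact slopeExcess_nonneg hκ hδ hα hτ (hδz z hz') (by linarith) (by linarith)
  exact hmono (left_mem_Icc.2 hxy) (right_mem_Icc.2 hxy) hxy

lemma strictAnti_forcing (hκ : 0 ≤ κ) (hα : 0 ≤ α) (hτ : 0 ≤ τ) (hz : 0 ≤ z) :
    StrictAnti fun V => forcing κ δ α τ V z := by
  intro V W hVW
  have hsteep : z ≤ barrierSlope κ δ α τ z := by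
    have : 0 ≤ 1 / (2 * τ) + α / 2 + κ * δ ^ 2 / (z - δ) ^ 2 := by positivity
    unfold barrierSlope
    linarith
  have hgain : 0 < (W - V) * (2 * barrierSlope κ δ α τ z - (2 * z - 2)) :=
    mul_pos (sub_pos.2 hVW) (by linarith)
  simp only [forcing]
  linarith

end Barrier

/-! ### Solutions vanishing at infinity -/

/-- A nonnegative classical solution of the Kompaneets equation on `(0,∞) × (0,T]` that tends to
`0` as `x → ∞` uniformly in time, with no initial trace and no decay rate. Time derivatives are
taken from the left, so that the equation makes sense at `t = T`. -/
structure IsVanishingKompSol (n : ℝ → ℝ → ℝ) (T : ℝ) : Prop where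
  nonneg : ∀ x > 0, ∀ t ∈ Ioc 0 T, 0 ≤ n x t
  continuousOn : ContinuousOn (fun p : ℝ × ℝ => n p.1 p.2) (Ioi 0 ×ˢ Ioc 0 T)
  differentiableAt : ∀ x > 0, ∀ t ∈ Ioc 0 T, DifferentiableAt ℝ (fun y => n y t) x
  differentiableAt_deriv : ∀ x > 0, ∀ t ∈ Ioc 0 T,
    DifferentiableAt ℝ (deriv fun y => n y t) x
  hasDerivWithinAt_time : ∀ x > 0, ∀ t ∈ Ioc 0 T,
    HasDerivWithinAt (n x) (deriv (kompFlux fun y => n y t) x) (Iic t) t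
  tendstoUniformlyOn : TendstoUniformlyOn n 0 atTop (Ioc 0 T)

lemma IsKompSolOn.isVanishingKompSol {n : ℝ → ℝ → ℝ} {n₀ : ℝ → ℝ} {T : ℝ}
    (h : IsKompSolOn n n₀ T) : IsVanishingKompSol n T where
  nonneg x hx t ht := h.nonneg x t hx ht.1 ht.2
  continuousOn := h.contOn
  differentiableAt x hx t ht := h.diff_x t ht.1 ht.2 x hx
  differentiableAt_deriv x hx t ht := h.diff_xx t ht.1 ht.2 x hx
  hasDerivWithinAt_time x hx t ht := by
    have htime := (h.diff_t x hx t ht.1 ht.2).hasDerivAt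
    rw [h.pde x hx t ht.1 ht.2] at htime
    exact htime.hasDerivWithinAt
  tendstoUniformlyOn := by
    refine Metric.tendstoUniformlyOn_iff.2 fun ε hε => ?_
    obtain ⟨R, -, hR⟩ := h.decay ε hε
    filter_upwards [eventually_ge_atTop R, eventually_ge_atTop 1] with x hxR hx1 t ht
    have hnonneg : 0 ≤ n x t := h.nonneg x t (by linarith) ht.1 ht.2
    rw [Pi.zero_apply, dist_zero_left, Real.norm_of_nonneg hnonneg]
    calc n x t ≤ x ^ 2 * n x t := le_mul_of_one_le_left hnonneg (one_le_pow₀ hx1)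
      _ < ε := hR x hxR t ht.1.le ht.2

/-! ### The two-point function -/

/-- The sum `u = n + Φ` of a solution and the potential `barrier`, with space and time in the same
order as in `n`. -/
noncomputable def compensated (n : ℝ → ℝ → ℝ) (κ δ α z t : ℝ) : ℝ :=
  n z t + barrier κ δ α t z

/-- The two-point function to which the minimum principle is applied. -/
noncomputable def compensatedGap (n : ℝ → ℝ → ℝ) (κ δ α x y t : ℝ) : ℝ :=
  compensated n κ δ α y t - compensated n κ δ α x t

lemma compensatedGap_eq {n : ℝ → ℝ → ℝ} {κ δ α x y t : ℝ} :
    compensatedGap n κ δ α x y t =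
      n y t - n x t + (barrier κ δ α t y - barrier κ δ α t x) := by
  unfold compensatedGap compensated
  ring

lemma exists_le_sub_of_compensatedGap_lt {n : ℝ → ℝ → ℝ} {T κ δ α ε R : ℝ}
    (hcont : ContinuousOn (fun p : ℝ × ℝ => n p.1 p.2) (Ioi 0 ×ˢ Icc 0 T)) (hκ : 0 ≤ κ)
    (hδ : 0 < δ) (hα : 0 ≤ α) (hε : 0 < ε) :
    ∃ c > 0, ∀ x y t, δ < x → x ≤ y → y ≤ R → t ∈ Icc 0 T →
      compensatedGap n κ δ α x y t < -ε → c ≤ y - x := by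
  have huniform : UniformContinuousOn (fun p : ℝ × ℝ => n p.1 p.2) (Icc δ R ×ˢ Icc 0 T) :=
    (isCompact_Icc.prod isCompact_Icc).uniformContinuousOn_of_continuous
      (hcont.mono (prod_mono (fun _ hx => hδ.trans_le hx.1) Subset.rfl))
  obtain ⟨c, hc, hclose⟩ := Metric.uniformContinuousOn_iff.1 huniform ε hε
  refine ⟨c, hc, fun x y t hx hxy hyR ht hgap => ?_⟩
  by_contra! hlt
  have hdist : dist (x, t) (y, t) < c := by
    rw [Prod.dist_eq, dist_self, dist_comm, Real.dist_eq, abs_of_nonneg (sub_nonneg.2 hxy)]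
    exact max_lt hlt hc
  have hn := hclose (x, t) ⟨⟨hx.le, hxy.trans hyR⟩, ht⟩ (y, t)
    ⟨⟨(hx.trans_le hxy).le, hyR⟩, ht⟩ hdist
  rw [Real.dist_eq] at hn
  have hbarrier := monotoneOn_barrier hκ hδ.le hα ht.1 hx (hx.trans_le hxy) hxy
  rw [compensatedGap_eq] at hgap
  linarith [(abs_lt.1 hn).2]

namespace IsVanishingKompSol

variable {n : ℝ → ℝ → ℝ} {T : ℝ}

lemma deriv_kompFlux (h : IsVanishingKompSol n T) {x t : ℝ} (hx : 0 < x) (ht : t ∈ Ioc 0 T) :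
    deriv (kompFlux fun y => n y t) x = x ^ 2 * deriv (deriv fun y => n y t) x
      + (x ^ 2 + 2 * n x t) * deriv (fun y => n y t) x + (2 * x - 2) * n x t := by
  have hn := (h.differentiableAt x hx t ht).hasDerivAt
  have hn' := (h.differentiableAt_deriv x hx t ht).hasDerivAt
  have hsq : HasDerivAt (fun y : ℝ => y ^ 2) (2 * x) x := by simpa using hasDerivAt_pow 2 x
  have hquad : HasDerivAt (fun y : ℝ => y ^ 2 - 2 * y) (2 * x - 2) x := by
    simpa using hsq.fun_sub ((hasDerivAt_id x).const_mul 2)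
  have hflux : HasDerivAt (kompFlux fun y => n y t) _ x :=
    ((hsq.mul hn').add (hquad.mul hn)).add (hn.pow 2)
  rw [hflux.deriv]
  push_cast
  ring

lemma le_of_forall_Ioo_le (h : IsVanishingKompSol n T) {M : ℝ}
    (hM : ∀ x > 0, ∀ t ∈ Ioo 0 T, n x t ≤ M) {x t : ℝ} (hx : 0 < x) (ht : t ∈ Ioc 0 T) :
    n x t ≤ M := by
  have hleft : Tendsto (n x) (𝓝[<] t) (𝓝 (n x t)) :=
    (h.hasDerivWithinAt_time x hx t ht).continuousWithinAt.mono Iio_subset_Iic_self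
  refine le_of_tendsto hleft ?_
  filter_upwards [Ioo_mem_nhdsLT ht.1] with s hs
  exact hM x hx s ⟨hs.1, hs.2.trans_le ht.2⟩

lemma comp_const_add (h : IsVanishingKompSol n T) {r : ℝ} (hr : 0 ≤ r) :
    IsVanishingKompSol (fun x t => n x (r + t)) (T - r) where
  nonneg x hx t ht := h.nonneg x hx (r + t) ⟨by linarith [ht.1], by linarith [ht.2]⟩
  continuousOn := h.continuousOn.comp (f := fun p : ℝ × ℝ => (p.1, r + p.2)) (by fun_prop)
    fun p hp => ⟨hp.1, by linarith [hp.2.1], by linarith [hp.2.2]⟩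
  differentiableAt x hx t ht :=
    h.differentiableAt x hx (r + t) ⟨by linarith [ht.1], by linarith [ht.2]⟩
  differentiableAt_deriv x hx t ht :=
    h.differentiableAt_deriv x hx (r + t) ⟨by linarith [ht.1], by linarith [ht.2]⟩
  hasDerivWithinAt_time x hx t ht := by
    have htime := h.hasDerivWithinAt_time x hx (r + t) ⟨by linarith [ht.1], by linarith [ht.2]⟩
    have hshift := htime.scomp t ((hasDerivAt_id t).const_add r).hasDerivWithinAt
      fun s (hs : s ∈ Iic t) => add_le_add_right hs r
    rwa [one_smul] at hshift
  tendstoUniformlyOn := by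
    refine Metric.tendstoUniformlyOn_iff.2 fun ε hε => ?_
    filter_upwards [Metric.tendstoUniformlyOn_iff.1 h.tendstoUniformlyOn ε hε] with x hx t ht
    exact hx (r + t) ⟨by linarith [ht.1], by linarith [ht.2]⟩

lemma continuousOn_comp_const_add (h : IsVanishingKompSol n T) {r : ℝ} (hr : 0 < r) :
    ContinuousOn (fun p : ℝ × ℝ => n p.1 (r + p.2)) (Ioi 0 ×ˢ Icc 0 (T - r)) :=
  h.continuousOn.comp (f := fun p : ℝ × ℝ => (p.1, r + p.2)) (by fun_prop)
    fun p hp => ⟨hp.1, by linarith [hp.2.1], by linarith [hp.2.2]⟩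

section Compensated

variable {κ δ α : ℝ}

lemma hasDerivAt_compensated (h : IsVanishingKompSol n T) {z t : ℝ} (hδ : 0 ≤ δ)
    (hz : δ < z) (ht : t ∈ Ioc 0 T) :
    HasDerivAt (fun y => compensated n κ δ α y t)
      (deriv (fun y => n y t) z + barrierSlope κ δ α t z) z :=
  (h.differentiableAt z (hδ.trans_lt hz) t ht).hasDerivAt.add (hasDerivAt_barrier hz)

lemma deriv_deriv_compensated (h : IsVanishingKompSol n T) {z t : ℝ} (hδ : 0 ≤ δ)
    (hz : δ < z) (ht : t ∈ Ioc 0 T) :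
    deriv (deriv fun y => compensated n κ δ α y t) z =
      deriv (deriv fun y => n y t) z + barrierCurvature κ δ z := by
  have hderiv : deriv (fun y => compensated n κ δ α y t) =ᶠ[𝓝 z]
      fun y => deriv (fun y => n y t) y + barrierSlope κ δ α t y := by
    filter_upwards [eventually_gt_nhds hz] with y hy
    exact (h.hasDerivAt_compensated hδ hy ht).deriv
  rw [hderiv.deriv_eq]
  exact ((h.differentiableAt_deriv z (hδ.trans_lt hz) t ht).hasDerivAt.add
    (hasDerivAt_barrierSlope hz)).deriv

lemma hasDerivWithinAt_compensated_time (h : IsVanishingKompSol n T) {z t : ℝ} (hδ : 0 ≤ δ)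
    (hz : δ < z) (ht : t ∈ Ioc 0 T) :
    HasDerivWithinAt (compensated n κ δ α z)
      (z ^ 2 * deriv (deriv fun y => compensated n κ δ α y t) z
        + (z ^ 2 + 2 * n z t) * deriv (fun y => compensated n κ δ α y t) z
        + forcing κ δ α t (compensated n κ δ α z t) z) (Iic t) t := by
  have hz0 : 0 < z := hδ.trans_lt hz
  refine ((h.hasDerivWithinAt_time z hz0 t ht).add
    (hasDerivAt_barrier_time ht.1.ne').hasDerivWithinAt).congr_deriv ?_
  rw [h.deriv_kompFlux hz0 ht, h.deriv_deriv_compensated hδ hz ht,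
    (h.hasDerivAt_compensated hδ hz ht).deriv]
  simp only [forcing, compensated]
  ring

lemma continuousOn_compensated (h : IsVanishingKompSol n T) (hδ : 0 ≤ δ) :
    ContinuousOn (fun p : ℝ × ℝ => compensated n κ δ α p.1 p.2) (Ioi δ ×ˢ Ioc 0 T) :=
  (h.continuousOn.mono (prod_mono (Ioi_subset_Ioi hδ) Subset.rfl)).add
    (continuousOn_barrier.mono (prod_mono Subset.rfl Ioc_subset_Ioi_self))

lemma compensated_le_of_isLocalMin (h : IsVanishingKompSol n T) {x y t : ℝ}
    (hκ : 3 + 4 * t ≤ κ) (hδ : 0 < δ) (hα : 0 ≤ α) (hx : δ < x) (hxy : x ≤ y)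
    (ht : t ∈ Ioc 0 T) (hnα : 6 * n x t ≤ α ^ 2 + 2 * α)
    (hmin : IsLocalMin (fun z => compensated n κ δ α z t) y)
    (hmax : IsLocalMax (fun z => compensated n κ δ α z t) x)
    (htime : IsLocalMinOn (compensatedGap n κ δ α x y) (Iic t) t) :
    compensated n κ δ α x t ≤ compensated n κ δ α y t := by
  by_contra! hlt
  have hy : δ < y := hx.trans_le hxy
  have hκ0 : 0 ≤ κ := by linarith [ht.1]
  have hrate := nonpos_of_isLocalMinOn_Iic htime
    ((h.hasDerivWithinAt_compensated_time hδ.le hy ht).sub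
      (h.hasDerivWithinAt_compensated_time hδ.le hx ht))
  rw [hmin.deriv_eq_zero, hmax.deriv_eq_zero] at hrate
  have hconvex := mul_nonneg (sq_nonneg y) (deriv_deriv_nonneg_of_isLocalMin hmin
    (h.hasDerivAt_compensated hδ.le hy ht).continuousAt)
  have hconcave := mul_nonpos_of_nonneg_of_nonpos (sq_nonneg x)
    (deriv_deriv_nonpos_of_isLocalMax hmax (h.hasDerivAt_compensated hδ.le hx ht).continuousAt)
  have hspace : forcing κ δ α t (compensated n κ δ α x t) x ≤
      forcing κ δ α t (compensated n κ δ α x t) y := by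
    refine forcing_le_forcing hκ hδ hα ht.1 hx hxy ?_ ?_
    · simpa only [compensated, add_sub_cancel_right] using hnα
    · have := h.nonneg y (hδ.trans hy) t ht
      unfold compensated at hlt ⊢
      linarith
  have hvalue : forcing κ δ α t (compensated n κ δ α x t) y <
      forcing κ δ α t (compensated n κ δ α y t) y :=
    strictAnti_forcing hκ0 hα ht.1.le (hδ.trans hy).le hlt
  linarith

lemma continuousOn_compensatedGap (h : IsVanishingKompSol n T) (hδ : 0 ≤ δ) :
    ContinuousOn (fun p : ℝ × ℝ × ℝ => compensatedGap n κ δ α p.1 p.2.1 p.2.2)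
      (Ioi δ ×ˢ Ioi δ ×ˢ Ioc 0 T) :=
  ((h.continuousOn_compensated hδ).comp (f := fun p : ℝ × ℝ × ℝ => (p.2.1, p.2.2))
    (by fun_prop) fun _ hp => ⟨hp.2.1, hp.2.2⟩).sub
  ((h.continuousOn_compensated hδ).comp (f := fun p : ℝ × ℝ × ℝ => (p.1, p.2.2))
    (by fun_prop) fun _ hp => ⟨hp.1, hp.2.2⟩)

lemma barrier_sub_barrier_lt (h : IsVanishingKompSol n T)
    (hnα : ∀ x > 0, ∀ t ∈ Ioc 0 T, 6 * n x t ≤ α ^ 2 + 2 * α) {x y t : ℝ} (hα : 0 ≤ α)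
    (hx : 0 < x) (hy : 0 < y) (ht : t ∈ Ioc 0 T) (hgap : compensatedGap n κ δ α x y t < 0) :
    barrier κ δ α t y - barrier κ δ α t x < (α + 1) ^ 2 := by
  have hny := h.nonneg y hy t ht
  have hnx := hnα x hx t ht
  rw [compensatedGap_eq] at hgap
  linarith [sq_nonneg α]

lemma exists_lt_of_compensatedGap_lt (h : IsVanishingKompSol n T)
    (hnα : ∀ x > 0, ∀ t ∈ Ioc 0 T, 6 * n x t ≤ α ^ 2 + 2 * α) {ε : ℝ} (hκ : 0 ≤ κ)
    (hδ : 0 ≤ δ) (hα : 0 ≤ α) (hε : 0 < ε) :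
    ∃ R > 0, ∀ x y t, δ < x → x ≤ y → t ∈ Ioc 0 T →
      compensatedGap n κ δ α x y t < -ε → y < R := by
  obtain ⟨R₀, hR₀⟩ := eventually_atTop.1
    (Metric.tendstoUniformlyOn_iff.1 h.tendstoUniformlyOn ε hε)
  refine ⟨max R₀ 0 + (α + 1) ^ 2, by positivity, fun x y t hx hxy ht hgap => ?_⟩
  by_contra! hRy
  have hx0 : 0 < x := hδ.trans_lt hx
  have hy : δ < y := hx.trans_le hxy
  have hy0 : 0 < y := hx0.trans_le hxy
  have hnear : x < R₀ := by
    by_contra! hfar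
    have hnx := hR₀ x hfar t ht
    rw [Pi.zero_apply, dist_zero_left] at hnx
    have hbarrier := monotoneOn_barrier hκ hδ hα ht.1.le hx hy hxy
    rw [compensatedGap_eq] at hgap
    linarith [Real.le_norm_self (n x t), h.nonneg y hy0 t ht]
  have hlong : (α + 1) ^ 2 ≤ y - x := by linarith [le_max_left R₀ 0]
  have hone : 1 ≤ (α + 1) ^ 2 := one_le_pow₀ (by linarith)
  have hgain : y - x ≤ barrier κ δ α t y - barrier κ δ α t x := by
    rw [barrier_sub_barrier hx hy]
    refine le_mul_of_one_le_right (sub_nonneg.2 hxy) ?_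
    have : 0 < x - δ := sub_pos.2 hx
    have : 0 < y - δ := sub_pos.2 hy
    have ht0 : 0 < t := ht.1
    have : 0 ≤ 1 / (2 * t) + α / 2 + κ * δ ^ 2 / ((x - δ) * (y - δ)) := by positivity
    linarith
  linarith [h.barrier_sub_barrier_lt hnα hα hx0 hy0 ht (hgap.trans (neg_lt_zero.2 hε))]

lemma exists_add_lt_and_lt_of_compensatedGap_neg (h : IsVanishingKompSol n T)
    (hnα : ∀ x > 0, ∀ t ∈ Ioc 0 T, 6 * n x t ≤ α ^ 2 + 2 * α) {c R : ℝ} (hκ : 0 < κ)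
    (hδ : 0 < δ) (hα : 0 ≤ α) (hc : 0 < c) (hR : 0 < R) :
    ∃ ρ > 0, ∃ σ > 0, ∀ x y t, δ < x → y ≤ R → t ∈ Ioc 0 T → c ≤ y - x →
      compensatedGap n κ δ α x y t < 0 → δ + ρ < x ∧ σ < t := by
  refine ⟨c * (κ * δ ^ 2) / ((α + 1) ^ 2 * R), by positivity, c / (2 * (α + 1) ^ 2),
    by positivity, fun x y t hx hyR ht hc_le hgap => ?_⟩
  have hx0 : 0 < x := hδ.trans hx
  have hy : δ < y := by linarith
  have : 0 < x - δ := sub_pos.2 hx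
  have : 0 < y - δ := sub_pos.2 hy
  have hy0 : 0 < y := hδ.trans hy
  have ht0 : 0 < t := ht.1
  have hgain := h.barrier_sub_barrier_lt hnα hα hx0 hy0 ht hgap
  rw [barrier_sub_barrier hx hy] at hgain
  have hsum : c * (1 / (2 * t)) + c * (κ * δ ^ 2 / ((x - δ) * (y - δ))) < (α + 1) ^ 2 := by
    refine lt_of_le_of_lt ?_ hgain
    rw [← mul_add]
    refine mul_le_mul hc_le ?_ (by positivity) (by linarith)
    have : 0 ≤ 5 * (x + y) / 4 + α / 2 := by positivity
    linarith
  constructor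
  · have hsing : c * (κ * δ ^ 2) / ((x - δ) * R) < (α + 1) ^ 2 := by
      have htime : 0 ≤ c * (1 / (2 * t)) := by positivity
      calc c * (κ * δ ^ 2) / ((x - δ) * R)
          ≤ c * (κ * δ ^ 2) / ((x - δ) * (y - δ)) := by
            gcongr
            linarith
        _ = c * (κ * δ ^ 2 / ((x - δ) * (y - δ))) := mul_div_assoc _ _ _
        _ < (α + 1) ^ 2 := by linarith
    rw [div_lt_iff₀ (by positivity)] at hsing
    rw [← lt_sub_iff_add_lt', div_lt_iff₀ (by positivity)]
    linarith
  · have htime : c / (2 * t) < (α + 1) ^ 2 := by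
      have hsing : 0 ≤ c * (κ * δ ^ 2 / ((x - δ) * (y - δ))) := by positivity
      rw [← mul_one_div]
      linarith
    rw [div_lt_iff₀ (by positivity)] at htime ⊢
    linarith

lemma exists_bounds_of_compensatedGap_lt (h : IsVanishingKompSol n T)
    (hcont : ContinuousOn (fun p : ℝ × ℝ => n p.1 p.2) (Ioi 0 ×ˢ Icc 0 T))
    (hnα : ∀ x > 0, ∀ t ∈ Ioc 0 T, 6 * n x t ≤ α ^ 2 + 2 * α) {ε : ℝ} (hκ : 0 < κ)
    (hδ : 0 < δ) (hα : 0 ≤ α) (hε : 0 < ε) :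
    ∃ ρ > 0, ∃ σ > 0, ∃ R, ∀ x y t, δ < x → x ≤ y → t ∈ Ioc 0 T →
      compensatedGap n κ δ α x y t < -ε → δ + ρ < x ∧ x < y ∧ y < R ∧ σ < t := by
  obtain ⟨R, hR, hright⟩ := h.exists_lt_of_compensatedGap_lt hnα hκ.le hδ.le hα hε
  obtain ⟨c, hc, hsep⟩ :=
    exists_le_sub_of_compensatedGap_lt (R := R) hcont hκ.le hδ hα hε
  obtain ⟨ρ, hρ, σ, hσ, hleft⟩ :=
    h.exists_add_lt_and_lt_of_compensatedGap_neg hnα hκ hδ hα hc hR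
  refine ⟨ρ, hρ, σ, hσ, R, fun x y t hx hxy ht hgap => ?_⟩
  have hyR := hright x y t hx hxy ht hgap
  have hc_le := hsep x y t hx hxy hyR.le (Ioc_subset_Icc_self ht) hgap
  obtain ⟨hρx, hσt⟩ := hleft x y t hx hyR.le ht hc_le (hgap.trans (neg_lt_zero.2 hε))
  exact ⟨hρx, by linarith, hyR, hσt⟩

lemma exists_isLocalMin_compensatedGap (h : IsVanishingKompSol n T)
    (hcont : ContinuousOn (fun p : ℝ × ℝ => n p.1 p.2) (Ioi 0 ×ˢ Icc 0 T))
    (hnα : ∀ x > 0, ∀ t ∈ Ioc 0 T, 6 * n x t ≤ α ^ 2 + 2 * α) {ε x y t : ℝ} (hκ : 0 < κ)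
    (hδ : 0 < δ) (hα : 0 ≤ α) (hε : 0 < ε) (hx : δ < x) (hxy : x ≤ y) (ht : t ∈ Ioc 0 T)
    (hgap : compensatedGap n κ δ α x y t < -ε) :
    ∃ a b s, δ < a ∧ a < b ∧ s ∈ Ioc 0 T ∧ compensatedGap n κ δ α a b s < -ε ∧
      IsLocalMin (fun z => compensated n κ δ α z s) b ∧
      IsLocalMax (fun z => compensated n κ δ α z s) a ∧
      IsLocalMinOn (compensatedGap n κ δ α a b) (Iic s) s := by
  obtain ⟨ρ, hρ, σ, hσ, R, hinterior⟩ :=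
    h.exists_bounds_of_compensatedGap_lt hcont hnα hκ hδ hα hε
  let K : Set (ℝ × ℝ × ℝ) :=
    (Icc (δ + ρ) R ×ˢ Icc (δ + ρ) R ×ˢ Icc σ t) ∩ {p | p.1 ≤ p.2.1}
  have hK : IsCompact K := (isCompact_Icc.prod (isCompact_Icc.prod isCompact_Icc)).inter_right
    (isClosed_le continuous_fst (continuous_fst.comp continuous_snd))
  have hgapK : ContinuousOn (fun p : ℝ × ℝ × ℝ => compensatedGap n κ δ α p.1 p.2.1 p.2.2) K :=
    (h.continuousOn_compensatedGap hδ.le).mono fun p hp =>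
      ⟨lt_of_lt_of_le (by linarith) hp.1.1.1, lt_of_lt_of_le (by linarith) hp.1.2.1.1,
        hσ.trans_le hp.1.2.2.1, hp.1.2.2.2.trans ht.2⟩
  obtain ⟨hρx, -, hyR, hσt⟩ := hinterior x y t hx hxy ht hgap
  have hmem : (x, y, t) ∈ K :=
    ⟨⟨⟨hρx.le, hxy.trans hyR.le⟩, ⟨hρx.le.trans hxy, hyR.le⟩, hσt.le, le_rfl⟩, hxy⟩
  obtain ⟨⟨a, b, s⟩, ⟨⟨ha, hb, hs⟩, hab⟩, hmin⟩ := hK.exists_isMinOn ⟨_, hmem⟩ hgapK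
  have hδa : δ < a := lt_of_lt_of_le (by linarith) ha.1
  have hsT : s ∈ Ioc 0 T := ⟨hσ.trans_le hs.1, hs.2.trans ht.2⟩
  have hlt : compensatedGap n κ δ α a b s < -ε := (hmin hmem).trans_lt hgap
  obtain ⟨hρa, hab', hbR, hσs⟩ := hinterior a b s hδa hab hsT hlt
  have hle : ∀ a' b' s', δ + ρ ≤ a' → a' ≤ b' → b' ≤ R → s' ∈ Icc σ t →
      compensatedGap n κ δ α a b s ≤ compensatedGap n κ δ α a' b' s' :=
    fun a' b' s' ha' hab' hb' hs' => hmin (a := (a', b', s'))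
      ⟨⟨⟨ha', hab'.trans hb'⟩, ⟨ha'.trans hab', hb'⟩, hs'⟩, hab'⟩
  refine ⟨a, b, s, hδa, hab', hsT, hlt, ?_, ?_, ?_⟩
  · filter_upwards [Ioo_mem_nhds hab' hbR] with z hz
    exact (sub_le_sub_iff_right _).1 (hle a z s ha.1 hz.1.le hz.2.le hs)
  · filter_upwards [Ioo_mem_nhds hρa hab'] with z hz
    exact (sub_le_sub_iff_left _).1 (hle z b s hz.1.le hz.2.le hb.2 hs)
  · filter_upwards [Ioc_mem_nhdsLE hσs] with r hr
    exact hle a b r ha.1 hab hb.2 ⟨hr.1.le, hr.2.trans hs.2⟩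

lemma monotoneOn_compensated (h : IsVanishingKompSol n T)
    (hcont : ContinuousOn (fun p : ℝ × ℝ => n p.1 p.2) (Ioi 0 ×ˢ Icc 0 T))
    (hnα : ∀ x > 0, ∀ t ∈ Ioc 0 T, 6 * n x t ≤ α ^ 2 + 2 * α) {t : ℝ} (hκ : 3 + 4 * T ≤ κ)
    (hδ : 0 < δ) (hα : 0 ≤ α) (ht : t ∈ Ioc 0 T) :
    MonotoneOn (fun z => compensated n κ δ α z t) (Ioi δ) := by
  intro x hx y _ hxy
  refine sub_nonneg.1 (le_of_forall_pos_lt_add fun ε hε => ?_)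
  by_contra! hgap
  have hκ0 : 0 < κ := by linarith [ht.1, ht.2]
  obtain ⟨a, b, s, ha, hab, hs, hneg, hminb, hmaxa, hmins⟩ :=
    h.exists_isLocalMin_compensatedGap hcont hnα (ε := ε / 2) hκ0 hδ hα (half_pos hε) hx hxy ht
      (by unfold compensatedGap; linarith)
  have hle := h.compensated_le_of_isLocalMin (by linarith [hs.2]) hδ hα ha hab.le hs
    (hnα a (hδ.trans ha) s hs) hminb hmaxa hmins
  unfold compensatedGap at hneg
  linarith

lemma neg_barrierSlope_le_deriv (h : IsVanishingKompSol n T)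
    (hcont : ContinuousOn (fun p : ℝ × ℝ => n p.1 p.2) (Ioi 0 ×ˢ Icc 0 T))
    (hnα : ∀ x > 0, ∀ t ∈ Ioc 0 T, 6 * n x t ≤ α ^ 2 + 2 * α) {x t : ℝ} (hκ : 3 + 4 * T ≤ κ)
    (hδ : 0 < δ) (hα : 0 ≤ α) (hx : δ < x) (ht : t ∈ Ioc 0 T) :
    -barrierSlope κ δ α t x ≤ deriv (fun y => n y t) x := by
  have hmono := h.monotoneOn_compensated hcont hnα hκ hδ hα ht
  have hderiv := (h.hasDerivAt_compensated (κ := κ) (α := α) hδ.le hx ht).hasDerivWithinAt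
    (s := Ioi δ)
  have hacc : AccPt x (𝓟 (Ioi δ)) :=
    uniqueDiffWithinAt_iff_accPt.1 (isOpen_Ioi.uniqueDiffWithinAt hx)
  linarith [hderiv.nonneg_of_monotoneOn hacc hmono]

lemma neg_barrierSlope_sub_le_deriv (h : IsVanishingKompSol n T)
    (hnα : ∀ x > 0, ∀ t ∈ Ioc 0 T, 6 * n x t ≤ α ^ 2 + 2 * α) {r x t : ℝ} (hκ : 3 + 4 * T ≤ κ)
    (hα : 0 ≤ α) (hr : 0 < r) (hrx : r < x) (hrt : r < t) (htT : t ≤ T) :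
    -barrierSlope κ r α (t - r) x ≤ deriv (fun y => n y t) x := by
  have hshift := (h.comp_const_add hr.le).neg_barrierSlope_le_deriv (κ := κ)
    (h.continuousOn_comp_const_add hr)
    (fun y hy s hs => hnα y hy (r + s) ⟨by linarith [hs.1], by linarith [hs.2]⟩)
    (by linarith) hr hα hrx ⟨sub_pos.2 hrt, sub_le_sub_right htT r⟩
  simpa only [add_sub_cancel] using hshift

end Compensated

end IsVanishingKompSol

theorem oleinik_inequality_general {n : ℝ → ℝ → ℝ} {T M α x t : ℝ}
    (h : IsVanishingKompSol n T) (hM : ∀ x > 0, ∀ t ∈ Ioo 0 T, n x t ≤ M)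
    (hα : √(6 * M + 1) - 1 ≤ α) (hx : 0 < x) (ht : t ∈ Ioc 0 T) :
    -(1 / (2 * t)) - 5 * x / 2 - α / 2 ≤ deriv (fun y => n y t) x := by
  have hM0 : 0 ≤ M := (h.nonneg x hx t ht).trans (h.le_of_forall_Ioo_le hM hx ht)
  have hα0 : 0 ≤ α := by linarith [Real.one_le_sqrt.2 (by linarith : 1 ≤ 6 * M + 1)]
  have hMα : 6 * M ≤ α ^ 2 + 2 * α := by
    linarith [(Real.sqrt_le_left (by linarith)).1 (by linarith : √(6 * M + 1) ≤ α + 1)]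
  have hnα : ∀ y > 0, ∀ s ∈ Ioc 0 T, 6 * n y s ≤ α ^ 2 + 2 * α := fun y hy s hs => by
    linarith [h.le_of_forall_Ioo_le hM hy hs]
  -- Time shift and singularity share the parameter `r`, so one limit `r → 0` removes both.
  have hslope : ∀ᶠ r in 𝓝[>] (0 : ℝ),
      -barrierSlope (3 + 4 * T) r α (t - r) x ≤ deriv (fun y => n y t) x := by
    filter_upwards [Ioo_mem_nhdsGT hx, Ioo_mem_nhdsGT ht.1] with r hrx hrt
    exact h.neg_barrierSlope_sub_le_deriv hnα le_rfl hα0 hrx.1 hrx.2 hrt.2 ht.2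
  have hlim := (tendsto_barrierSlope (κ := 3 + 4 * T) (α := α) hx.ne' ht.1.ne').neg.mono_left
    (nhdsWithin_le_nhds (s := Ioi 0))
  linarith [le_of_tendsto hlim hslope]

theorem oleinik_inequality
    (T : ℝ) (hT : 0 < T) (n : ℝ → ℝ → ℝ) (n₀ : ℝ → ℝ)
    (hsol : IsKompSolOn n n₀ T)
    (h0nonneg : ∀ x : ℝ, 0 < x → 0 ≤ n₀ x)
    (h0bdd : ∃ C : ℝ, ∀ x : ℝ, 0 < x → n₀ x ≤ C)
    (h0decay : Filter.Tendsto (fun x => x ^ 2 * n₀ x) Filter.atTop (nhds 0))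
    (M : ℝ) (hM : ∀ x t : ℝ, 0 < x → 0 < t → t < T → n x t ≤ M) :
    ∀ x : ℝ, 0 < x → ∀ t : ℝ, 0 < t → t ≤ T →
      ∀ α : ℝ, Real.sqrt (6 * M + 1) - 1 ≤ α →
        -(1 / (2 * t)) - 5 * x / 2 - α / 2 ≤ deriv (fun y => n y t) x := by
  intro x hx t ht htT α hα
  exact oleinik_inequality_general hsol.isVanishingKompSol
    (fun y hy s hs => hM y s hy hs.1 hs.2) hα hx ⟨ht, htT⟩
end

section
/- Let T > 0, Q_T = (0,∞)×(0,T), and let n ∈ L∞(Q_T) be a nonnegative solution of the Kompaneets equation on Q_T with initial data n₀ satisfying x² n₀(x) → 0 as x → ∞. Then for every t ∈ (0,T], the limit lim_{x→0⁺} n(x,t) exists (so the solution extends continuously to the zero-energy boundary at each positive time). -/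
/-!
The convection term `∂ₓ(n²)` forces negative slopes of `n(·,t)` to relax at least as fast as
`-1/(2t)`, as in Oleinik's estimate for Burgers' equation: if `0 ≤ n ≤ M`, then
`n(x,t) - n(y,t) ≤ Φ(y,t) (y - x)` for `0 < x ≤ y < ρ ≤ 1/2`, where
`Φ(y,t) = 1/(2t) + (M+2)/(ρ-y)²`. So `x ↦ n(x,t) + C x` is nondecreasing near `0` for some `C`; it
is also bounded below, hence has a limit at `0⁺`.

Differentiating the equation would need a third derivative of `n`, so the maximum principle is
applied to the two-point function `n(x,t) - n(y,t) - (y - x + δ) Φ(y,t) + δ log x`. The subtracted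
penalty blows up as `x → 0`, `y → ρ` or `t → 0`, so that a positive supremum is attained without
any boundary or initial condition. The diffusion coefficients `x²` and `y²` differ at the two
points, but `(x ∂ₓ + y ∂_y)²` sees both: the second-order condition at the maximum is taken along
the dilation `s ↦ (s x, s y)`, and every error term is then proportional to `y - x + δ` and absorbed
by `-2 Φ²`.
-/

open MeasureTheory Filter Set Real Topology

section Calculus

/-- Minimal regularity for second derivatives at a point: `u` is differentiable near `x` and its
derivative is differentiable at `x`. The second derivative need not be continuous. -/
def TwiceDifferentiableAt (u : ℝ → ℝ) (x : ℝ) : Prop :=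
  (∀ᶠ z in 𝓝 x, DifferentiableAt ℝ u z) ∧ DifferentiableAt ℝ (deriv u) x

lemma TwiceDifferentiableAt.hasDerivAt {u : ℝ → ℝ} {x : ℝ} (hu : TwiceDifferentiableAt u x) :
    HasDerivAt u (deriv u x) x :=
  hu.1.self_of_nhds.hasDerivAt

lemma TwiceDifferentiableAt.eventually_hasDerivAt_comp_mul {u : ℝ → ℝ} {x : ℝ}
    (hu : TwiceDifferentiableAt u x) :
    ∀ᶠ s in 𝓝 (1 : ℝ), HasDerivAt (fun s => u (s * x)) (deriv u (s * x) * x) s := by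
  have hscale : Tendsto (fun s : ℝ => s * x) (𝓝 1) (𝓝 x) :=
    (continuous_mul_const x).tendsto' 1 x (one_mul x)
  filter_upwards [hscale.eventually hu.1] with s hs
  exact hs.hasDerivAt.comp s (hasDerivAt_mul_const x)

lemma TwiceDifferentiableAt.hasDerivAt_deriv_comp_mul {u : ℝ → ℝ} {x : ℝ}
    (hu : TwiceDifferentiableAt u x) :
    HasDerivAt (fun s => deriv u (s * x) * x) (deriv (deriv u) x * x ^ 2) 1 := by
  have hderiv : HasDerivAt (deriv u) (deriv (deriv u) x) (1 * x) := by
    rw [one_mul]; exact hu.2.hasDerivAt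
  refine ((hderiv.comp 1 (hasDerivAt_mul_const x)).mul_const x).congr_deriv ?_
  ring

lemma nonneg_of_hasDerivWithinAt_of_isLocalMaxOn_Iic {f : ℝ → ℝ} {f' t : ℝ}
    (hf : HasDerivWithinAt f f' (Iic t) t) (hmax : IsLocalMaxOn f (Iic t) t) : 0 ≤ f' := by
  have hdir : (t - 1) - t ∈ posTangentConeAt (Iic t) t :=
    sub_mem_posTangentConeAt_of_segment_subset <|
      (convex_Iic t).segment_subset self_mem_Iic (by simp)
  simpa using hmax.hasFDerivWithinAt_nonpos hf.hasFDerivWithinAt hdir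

lemma nonpos_of_hasDerivAt_of_isLocalMax {f g : ℝ → ℝ} {x g' : ℝ}
    (hf : ∀ᶠ z in 𝓝 x, HasDerivAt f (g z) z) (hg : HasDerivAt g g' x)
    (hmax : IsLocalMax f x) : g' ≤ 0 := by
  by_contra! hpos
  have hdd : deriv (deriv f) x = g' :=
    (EventuallyEq.deriv_eq (hf.mono fun z hz => hz.deriv)).trans hg.deriv
  have hmin : IsLocalMin f x :=
    isLocalMin_of_deriv_deriv_pos (hdd ▸ hpos) hmax.deriv_eq_zero hf.self_of_nhds.continuousAt
  have hconst : f =ᶠ[𝓝 x] fun _ => f x := by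
    filter_upwards [hmax, hmin] with z h₁ h₂ using le_antisymm h₁ h₂
  have hzero : deriv (deriv f) x = 0 := by simpa using hconst.deriv.deriv_eq
  exact hpos.ne' (hdd ▸ hzero)

lemma exists_tendsto_nhdsGT_of_sub_le {f : ℝ → ℝ} {a b m C : ℝ} (hab : a < b)
    (hbdd : ∀ x ∈ Ioo a b, m ≤ f x)
    (hlip : ∀ x ∈ Ioo a b, ∀ y ∈ Ioo a b, x ≤ y → f x - f y ≤ C * (y - x)) :
    ∃ L, Tendsto f (𝓝[>] a) (𝓝 L) := by
  have hmono : MonotoneOn (fun x => f x + C * x) (Ioo a b) := fun x hx y hy hxy => by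
    dsimp only
    linarith [hlip x hx y hy hxy]
  have hbelow : BddBelow ((fun x => f x + C * x) '' Ioo a b) := by
    obtain ⟨k, hk⟩ := (isCompact_Icc (a := a) (b := b)).bddBelow_image
      (continuous_const_mul C).continuousOn
    refine ⟨m + k, ?_⟩
    rintro _ ⟨x, hx, rfl⟩
    exact add_le_add (hbdd x hx) (hk (mem_image_of_mem _ (Ioo_subset_Icc_self hx)))
  have hlim := hmono.tendsto_nhdsWithin_Ioo_right (nonempty_Ioo.mpr hab) hbelow
  have hlin : Tendsto (fun x => C * x) (𝓝[>] a) (𝓝 (C * a)) :=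
    (continuous_const_mul C).continuousAt.tendsto.mono_left nhdsWithin_le_nhds
  exact ⟨_, (hlim.sub hlin).congr fun x => add_sub_cancel_right _ _⟩

end Calculus

lemma deriv_kompFlux {u : ℝ → ℝ} {x : ℝ} (hu : TwiceDifferentiableAt u x) :
    deriv (kompFlux u) x =
      x ^ 2 * deriv (deriv u) x + (x ^ 2 + 2 * u x) * deriv u x + (2 * x - 2) * u x := by
  have hu' := hu.hasDerivAt
  have hid := hasDerivAt_id x
  have hflux := (((hid.pow 2).mul hu.2.hasDerivAt).add
    (((hid.pow 2).sub (hid.const_mul 2)).mul hu')).add (hu'.pow 2)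
  have hkomp : HasDerivAt (kompFlux u) _ x := hflux
  rw [hkomp.deriv]
  simp only [id_eq, Pi.pow_apply, Pi.sub_apply]
  push_cast
  ring

section TwoPointPenalty

/-- The penalty subtracted from `u x - u y` in the doubling of variables: `φ` is the slope to be
compared with `-u'`, and `δ > 0` is a perturbation that makes the penalty positive on the diagonal
and infinite at `x = 0`. -/
noncomputable def twoPointPenalty (φ : ℝ → ℝ) (δ x y : ℝ) : ℝ :=
  (y - x + δ) * φ y - δ * log x

variable {u φ : ℝ → ℝ} {δ x y : ℝ}

lemma deriv_left_eq_of_isLocalMax (hx : 0 < x) (hu : TwiceDifferentiableAt u x)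
    (hmax : IsLocalMax (fun z : ℝ × ℝ => u z.1 - u z.2 - twoPointPenalty φ δ z.1 z.2) (x, y)) :
    deriv u x = -(φ y + δ / x) := by
  have hslice : IsLocalMax (fun z => u z - u y - twoPointPenalty φ δ z y) x :=
    hmax.comp_continuous (g := fun z => (z, y)) (by fun_prop)
  have hpenalty : HasDerivAt (fun z => twoPointPenalty φ δ z y) (-φ y - δ / x) x :=
    (((((hasDerivAt_id x).const_sub y).add_const δ).mul_const (φ y)).sub
      ((hasDerivAt_log hx.ne').const_mul δ)).congr_deriv (by ring)
  linarith [hslice.hasDerivAt_eq_zero ((hu.hasDerivAt.sub_const (u y)).sub hpenalty)]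

lemma deriv_right_eq_of_isLocalMax (hu : TwiceDifferentiableAt u y)
    (hφ : TwiceDifferentiableAt φ y)
    (hmax : IsLocalMax (fun z : ℝ × ℝ => u z.1 - u z.2 - twoPointPenalty φ δ z.1 z.2) (x, y)) :
    deriv u y = -(φ y + (y - x + δ) * deriv φ y) := by
  have hslice : IsLocalMax (fun z => u x - u z - twoPointPenalty φ δ x z) y :=
    hmax.comp_continuous (g := fun z => (x, z)) (by fun_prop)
  have hpenalty : HasDerivAt (fun z => twoPointPenalty φ δ x z)
      (φ y + (y - x + δ) * deriv φ y) y :=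
    (((((hasDerivAt_id y).sub_const x).add_const δ).mul hφ.hasDerivAt).sub_const
      (δ * log x)).congr_deriv (by simp)
  linarith [hslice.hasDerivAt_eq_zero ((hu.hasDerivAt.const_sub (u x)).sub hpenalty)]

lemma sq_mul_deriv_deriv_sub_le_of_isLocalMax (hx : 0 < x)
    (hux : TwiceDifferentiableAt u x) (huy : TwiceDifferentiableAt u y)
    (hφ : TwiceDifferentiableAt φ y)
    (hmax : IsLocalMax (fun z : ℝ × ℝ => u z.1 - u z.2 - twoPointPenalty φ δ z.1 z.2) (x, y)) :
    x ^ 2 * deriv (deriv u) x - y ^ 2 * deriv (deriv u) y ≤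
      2 * (y - x) * (y * deriv φ y) + (y - x + δ) * (y ^ 2 * deriv (deriv φ) y) + δ := by
  have hslice : IsLocalMax
      (fun s => u (s * x) - u (s * y) - twoPointPenalty φ δ (s * x) (s * y)) 1 :=
    IsLocalMax.comp_continuous
      (f := fun z : ℝ × ℝ => u z.1 - u z.2 - twoPointPenalty φ δ z.1 z.2)
      (g := fun s => (s * x, s * y)) (by simpa only [one_mul] using hmax) (by fun_prop)
  have hfirst : ∀ᶠ s in 𝓝 (1 : ℝ),
      HasDerivAt (fun s => u (s * x) - u (s * y) - twoPointPenalty φ δ (s * x) (s * y))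
        (deriv u (s * x) * x - deriv u (s * y) * y -
          ((y - x) * φ (s * y) + (s * (y - x) + δ) * (deriv φ (s * y) * y) - δ * s⁻¹)) s := by
    filter_upwards [hux.eventually_hasDerivAt_comp_mul, huy.eventually_hasDerivAt_comp_mul,
      hφ.eventually_hasDerivAt_comp_mul, lt_mem_nhds one_pos] with s hsx hsy hsφ hs
    have hgap : HasDerivAt (fun s => s * y - s * x + δ) (y - x) s :=
      ((hasDerivAt_mul_const y).sub (hasDerivAt_mul_const x)).add_const δ
    have hlog := ((hasDerivAt_mul_const x).log (mul_pos hs hx).ne').const_mul δ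
    refine ((hsx.sub hsy).sub ((hgap.mul hsφ).sub hlog)).congr_deriv ?_
    field_simp
  have hsecond : HasDerivAt
      (fun s => deriv u (s * x) * x - deriv u (s * y) * y -
          ((y - x) * φ (s * y) + (s * (y - x) + δ) * (deriv φ (s * y) * y) - δ * s⁻¹))
      (deriv (deriv u) x * x ^ 2 - deriv (deriv u) y * y ^ 2 -
        (2 * (y - x) * (y * deriv φ y) + (y - x + δ) * (y ^ 2 * deriv (deriv φ) y) + δ)) 1 := by
    have hgap : HasDerivAt (fun s => s * (y - x) + δ) (y - x) 1 :=
      (hasDerivAt_mul_const (y - x)).add_const δ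
    refine ((hux.hasDerivAt_deriv_comp_mul.sub huy.hasDerivAt_deriv_comp_mul).sub
      (((hφ.eventually_hasDerivAt_comp_mul.self_of_nhds.const_mul (y - x)).add
        (hgap.mul hφ.hasDerivAt_deriv_comp_mul)).sub
        ((hasDerivAt_inv one_ne_zero).const_mul δ))).congr_deriv ?_
    simp only [one_mul]
    ring
  linarith [nonpos_of_hasDerivAt_of_isLocalMax hfirst hsecond hslice]

lemma deriv_kompFlux_sub_le_of_isLocalMax (hx : 0 < x) (hxy : x ≤ y) (hy : y ≤ 1 / 2)
    (hδ : 0 ≤ δ) (hux : TwiceDifferentiableAt u x) (huy : TwiceDifferentiableAt u y)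
    (hφ : TwiceDifferentiableAt φ y) (hφ_one : 1 ≤ φ y)
    (hφ_deriv : 0 ≤ deriv φ y) (hu : 0 ≤ u y)
    (hpos : twoPointPenalty φ δ x y ≤ u x - u y)
    (hmax : IsLocalMax (fun z : ℝ × ℝ => u z.1 - u z.2 - twoPointPenalty φ δ z.1 z.2) (x, y)) :
    deriv (kompFlux u) x - deriv (kompFlux u) y ≤
      (y - x + δ) * (y ^ 2 * deriv (deriv φ) y + (2 * y + y ^ 2 + 2 * u y) * deriv φ y -
        2 * φ y ^ 2) := by
  have hdiffusion := sq_mul_deriv_deriv_sub_le_of_isLocalMax hx hux huy hφ hmax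
  have hgap : (y - x + δ) * φ y ≤ u x - u y := by
    have hlog : δ * log x ≤ 0 :=
      mul_nonpos_of_nonneg_of_nonpos hδ (log_nonpos hx.le (by linarith))
    unfold twoPointPenalty at hpos
    linarith
  have hδφ : δ ≤ δ * φ y := le_mul_of_one_le_right hδ hφ_one
  have hslope : 0 ≤ (y - x) * φ y := mul_nonneg (by linarith) (by linarith)
  have hconvection_left :
      (x ^ 2 + 2 * u x) * deriv u x ≤ -((x ^ 2 + 2 * u x) * φ y) := by
    rw [deriv_left_eq_of_isLocalMax hx hux hmax]
    have : 0 ≤ (x ^ 2 + 2 * u x) * (δ / x) :=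
      mul_nonneg (by nlinarith) (by positivity)
    linarith
  have hreaction : x * u x - y * u y ≤ x * (u x - u y) := by
    linarith [mul_le_mul_of_nonneg_right hxy hu]
  have hrelaxation : 2 * φ y * ((y - x + δ) * φ y) ≤ 2 * φ y * (u x - u y) :=
    mul_le_mul_of_nonneg_left hgap (by linarith)
  have habsorb : (x + y) * ((y - x) * φ y) + δ ≤ 2 * (1 - x) * (u x - u y) :=
    calc (x + y) * ((y - x) * φ y) + δ
        ≤ 1 * ((y - x) * φ y) + δ * φ y :=
          add_le_add (mul_le_mul_of_nonneg_right (by linarith) hslope) hδφ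
      _ = (y - x + δ) * φ y := by ring
      _ ≤ u x - u y := hgap
      _ ≤ 2 * (1 - x) * (u x - u y) :=
          le_mul_of_one_le_left (by linarith) (by linarith)
  have hdilation : 0 ≤ δ * (y * deriv φ y) := by
    have : 0 ≤ y := hx.le.trans hxy
    positivity
  rw [deriv_kompFlux hux, deriv_kompFlux huy, deriv_right_eq_of_isLocalMax huy hφ hmax]
  linarith

end TwoPointPenalty

section SlopeBarrier

/-- The slope bound `Φ(y,t)` for solutions with values in `[0, M]`: the first summand solves
`Φ' = -2 Φ²`, the second localizes the estimate to `y < ρ`. -/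
noncomputable def slopeBarrier (M ρ y t : ℝ) : ℝ :=
  1 / (2 * t) + (M + 2) / (ρ - y) ^ 2

variable {M ρ y t : ℝ}

lemma hasDerivAt_slopeBarrier_right (ht : t ≠ 0) :
    HasDerivAt (slopeBarrier M ρ y) (-(1 / (2 * t ^ 2))) t := by
  refine ((((hasDerivAt_id t).const_mul 2).fun_inv (by simpa using ht)).const_mul
    1 |>.add_const ((M + 2) / (ρ - y) ^ 2)).congr_deriv ?_
  simp only [id]
  field_simp

lemma hasDerivAt_slopeBarrier_left (hy : y < ρ) :
    HasDerivAt (fun z => slopeBarrier M ρ z t) (2 * (M + 2) / (ρ - y) ^ 3) y := by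
  have hρy : ρ - y ≠ 0 := (sub_pos.mpr hy).ne'
  refine ((((hasDerivAt_id y).const_sub ρ).fun_pow 2).fun_inv (pow_ne_zero 2 hρy) |>.const_mul
    (M + 2) |>.const_add (1 / (2 * t))).congr_deriv ?_
  simp only [id]
  field_simp
  ring

lemma eventually_deriv_slopeBarrier_left (hy : y < ρ) :
    deriv (fun z => slopeBarrier M ρ z t) =ᶠ[𝓝 y] fun z => 2 * (M + 2) / (ρ - z) ^ 3 := by
  filter_upwards [gt_mem_nhds hy] with z hz using (hasDerivAt_slopeBarrier_left hz).deriv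

lemma hasDerivAt_deriv_slopeBarrier_left (hy : y < ρ) :
    HasDerivAt (deriv fun z => slopeBarrier M ρ z t) (6 * (M + 2) / (ρ - y) ^ 4) y := by
  have hρy : ρ - y ≠ 0 := (sub_pos.mpr hy).ne'
  refine HasDerivAt.congr_of_eventuallyEq ?_ (eventually_deriv_slopeBarrier_left hy)
  refine ((((hasDerivAt_id y).const_sub ρ).fun_pow 3).fun_inv (pow_ne_zero 3 hρy) |>.const_mul
    (2 * (M + 2))).congr_deriv ?_
  simp only [id]
  field_simp
  ring

lemma twiceDifferentiableAt_slopeBarrier (hy : y < ρ) :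
    TwiceDifferentiableAt (fun z => slopeBarrier M ρ z t) y :=
  ⟨(gt_mem_nhds hy).mono fun _ hz => (hasDerivAt_slopeBarrier_left hz).differentiableAt,
    (hasDerivAt_deriv_slopeBarrier_left hy).differentiableAt⟩

lemma slopeBarrier_le_slopeBarrier {z : ℝ} (hM : 0 ≤ M) (hyz : y ≤ z) (hz : z < ρ) :
    slopeBarrier M ρ y t ≤ slopeBarrier M ρ z t := by
  have : 0 < ρ - z := sub_pos.mpr hz
  unfold slopeBarrier
  gcongr

lemma deriv_slopeBarrier_left_nonneg (hM : 0 ≤ M) (hy : y < ρ) :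
    0 ≤ deriv (fun z => slopeBarrier M ρ z t) y := by
  rw [(hasDerivAt_slopeBarrier_left hy).deriv]
  have : 0 < ρ - y := sub_pos.mpr hy
  positivity

lemma one_le_slopeBarrier (hM : 0 ≤ M) (hy₀ : 0 ≤ y) (hy : y < ρ) (hρ : ρ ≤ 1) (ht : 0 < t) :
    1 ≤ slopeBarrier M ρ y t := by
  have hspace : 1 ≤ (M + 2) / (ρ - y) ^ 2 := by
    rw [one_le_div (by nlinarith)]
    nlinarith
  have htime : 0 < 1 / (2 * t) := by positivity
  unfold slopeBarrier
  linarith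

lemma slopeBarrier_strict_supersolution {q : ℝ} (hy₀ : 0 ≤ y) (hy : y < ρ) (hρ : ρ ≤ 1 / 2)
    (ht : 0 < t) (hq : 0 ≤ q) (hqM : q ≤ M) :
    y ^ 2 * deriv (deriv fun z => slopeBarrier M ρ z t) y +
        (2 * y + y ^ 2 + 2 * q) * deriv (fun z => slopeBarrier M ρ z t) y -
        2 * slopeBarrier M ρ y t ^ 2 < deriv (slopeBarrier M ρ y) t := by
  rw [(hasDerivAt_deriv_slopeBarrier_left hy).deriv, (hasDerivAt_slopeBarrier_left hy).deriv,
    (hasDerivAt_slopeBarrier_right ht.ne').deriv, slopeBarrier]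
  have hd : 0 < ρ - y := sub_pos.mpr hy
  have hM : 0 ≤ M := hq.trans hqM
  have hspace : y ^ 2 * (6 * (M + 2) / (ρ - y) ^ 4) +
      (2 * y + y ^ 2 + 2 * q) * (2 * (M + 2) / (ρ - y) ^ 3) ≤ 2 * ((M + 2) / (ρ - y) ^ 2) ^ 2 := by
    have hcoeff : 6 * y ^ 2 + 2 * (2 * y + y ^ 2 + 2 * q) * (ρ - y) ≤ 2 * (M + 2) := by
      nlinarith
    calc _ = (M + 2) * (6 * y ^ 2 + 2 * (2 * y + y ^ 2 + 2 * q) * (ρ - y)) / (ρ - y) ^ 4 := by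
          field_simp
      _ ≤ (M + 2) * (2 * (M + 2)) / (ρ - y) ^ 4 := by gcongr
      _ = _ := by field_simp
  have htime : 1 / (2 * t ^ 2) = 2 * (1 / (2 * t)) ^ 2 := by field_simp
  have hcross : 0 < 1 / (2 * t) * ((M + 2) / (ρ - y) ^ 2) := by positivity
  linarith

lemma exists_margin_of_twoPointPenalty_slopeBarrier_lt {δ : ℝ} (hM : 0 ≤ M) (hρ : ρ ≤ 1)
    (hδ : 0 < δ) :
    ∃ c > 0, ∀ x y t, 0 < x → x ≤ y → y < ρ → 0 < t →
      twoPointPenalty (fun z => slopeBarrier M ρ z t) δ x y < M → c < x ∧ y < ρ - c ∧ c < t := by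
  refine ⟨min (δ / (2 * (M + 1))) (exp (-(M / δ))), by positivity, ?_⟩
  intro x y t hx hxy hy ht hlt
  have hd : 0 < ρ - y := sub_pos.mpr hy
  have hslope : 0 ≤ (y - x) * slopeBarrier M ρ y t :=
    mul_nonneg (by linarith) (by unfold slopeBarrier; positivity)
  have hspace : 0 < δ * ((M + 2) / (ρ - y) ^ 2) := by positivity
  have htime : 0 < δ * (1 / (2 * t)) := by positivity
  have hlog : δ * log x ≤ 0 :=
    mul_nonpos_of_nonneg_of_nonpos hδ.le (log_nonpos hx.le (by linarith))
  have hsum : twoPointPenalty (fun z => slopeBarrier M ρ z t) δ x y =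
      (y - x) * slopeBarrier M ρ y t + δ * (1 / (2 * t)) + δ * ((M + 2) / (ρ - y) ^ 2) -
        δ * log x := by
    unfold twoPointPenalty slopeBarrier
    ring
  rw [hsum] at hlt
  refine ⟨min_lt_of_right_lt ?_, lt_sub_comm.mp (min_lt_of_left_lt ?_), min_lt_of_left_lt ?_⟩
  · rw [← lt_log_iff_exp_lt hx, neg_lt, lt_div_iff₀ hδ]
    linarith
  · have hlt' : δ * (M + 2) < M * (ρ - y) ^ 2 := by
      rw [← div_lt_iff₀ (by positivity), mul_div_assoc]
      linarith
    rw [div_lt_iff₀ (by positivity)]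
    nlinarith
  · have hlt' : δ < M * (2 * t) := by
      rw [← div_lt_iff₀ (by positivity), ← mul_one_div]
      linarith
    rw [div_lt_iff₀ (by positivity)]
    linarith

end SlopeBarrier

section LocalSolution

/-- A nonnegative classical solution of the Kompaneets equation on `(0, r) × (0, T]`, with no
condition at `t = 0` and at the endpoints `x = 0` and `x = r`. -/
structure IsKompSolNear (n : ℝ → ℝ → ℝ) (r T : ℝ) : Prop where
  nonneg : ∀ x ∈ Ioo 0 r, ∀ t ∈ Ioc 0 T, 0 ≤ n x t
  continuousOn : ContinuousOn (fun p : ℝ × ℝ => n p.1 p.2) (Ioo 0 r ×ˢ Ioc 0 T)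
  twiceDifferentiableAt : ∀ x ∈ Ioo 0 r, ∀ t ∈ Ioc 0 T, TwiceDifferentiableAt (n · t) x
  differentiableAt_time : ∀ x ∈ Ioo 0 r, ∀ t ∈ Ioc 0 T, DifferentiableAt ℝ (n x) t
  deriv_time_eq : ∀ x ∈ Ioo 0 r, ∀ t ∈ Ioc 0 T, deriv (n x) t = deriv (kompFlux (n · t)) x

/-- The points `((x, y), t)` with `0 < x ≤ y < ρ` and `0 < t ≤ T`. -/
def twoPointDomain (ρ T : ℝ) : Set ((ℝ × ℝ) × ℝ) :=
  {z | (0 < z.1.1 ∧ z.1.1 ≤ z.1.2 ∧ z.1.2 < ρ) ∧ z.2 ∈ Ioc 0 T}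

/-- The function of `((x, y), t)` to which the maximum principle is applied. -/
noncomputable def twoPointGap (n : ℝ → ℝ → ℝ) (M ρ δ : ℝ) (z : (ℝ × ℝ) × ℝ) : ℝ :=
  n z.1.1 z.2 - n z.1.2 z.2 -
    twoPointPenalty (fun w => slopeBarrier M ρ w z.2) δ z.1.1 z.1.2

namespace IsKompSolNear

variable {n : ℝ → ℝ → ℝ} {r ρ T M δ : ℝ}

lemma mono (h : IsKompSolNear n r T) (hρ : ρ ≤ r) : IsKompSolNear n ρ T := by
  have hsub : Ioo 0 ρ ⊆ Ioo 0 r := Ioo_subset_Ioo_right hρ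
  exact ⟨fun x hx => h.nonneg x (hsub hx), h.continuousOn.mono (prod_mono_left hsub),
    fun x hx => h.twiceDifferentiableAt x (hsub hx),
    fun x hx => h.differentiableAt_time x (hsub hx),
    fun x hx => h.deriv_time_eq x (hsub hx)⟩

lemma le_of_forall_lt (h : IsKompSolNear n r T)
    (hM : ∀ x ∈ Ioo 0 r, ∀ t ∈ Ioo 0 T, n x t ≤ M) : ∀ x ∈ Ioo 0 r, ∀ t ∈ Ioc 0 T, n x t ≤ M := by
  intro x hx t ht
  refine le_of_tendsto ((h.differentiableAt_time x hx t ht).continuousAt.tendsto.mono_left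
    (nhdsWithin_le_nhds (s := Iio t))) ?_
  filter_upwards [Ioo_mem_nhdsLT ht.1] with s hs
  exact hM x hx s ⟨hs.1, hs.2.trans_le ht.2⟩

lemma continuousOn_twoPointGap (h : IsKompSolNear n ρ T) :
    ContinuousOn (twoPointGap n M ρ δ) (twoPointDomain ρ T) := by
  have hleft : ContinuousOn (fun z : (ℝ × ℝ) × ℝ => n z.1.1 z.2) (twoPointDomain ρ T) :=
    h.continuousOn.comp (f := fun z : (ℝ × ℝ) × ℝ => (z.1.1, z.2)) (by fun_prop)
      fun z hz => ⟨⟨hz.1.1, hz.1.2.1.trans_lt hz.1.2.2⟩, hz.2⟩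
  have hright : ContinuousOn (fun z : (ℝ × ℝ) × ℝ => n z.1.2 z.2) (twoPointDomain ρ T) :=
    h.continuousOn.comp (f := fun z : (ℝ × ℝ) × ℝ => (z.1.2, z.2)) (by fun_prop)
      fun z hz => ⟨⟨hz.1.1.trans_le hz.1.2.1, hz.1.2.2⟩, hz.2⟩
  have hpenalty : ContinuousOn (fun z : (ℝ × ℝ) × ℝ =>
      twoPointPenalty (fun w => slopeBarrier M ρ w z.2) δ z.1.1 z.1.2) (twoPointDomain ρ T) := by
    have hx : ∀ z ∈ twoPointDomain ρ T, z.1.1 ≠ 0 := fun z hz => hz.1.1.ne'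
    have hy : ∀ z ∈ twoPointDomain ρ T, (ρ - z.1.2) ^ 2 ≠ 0 := fun z hz =>
      pow_ne_zero 2 (sub_pos.mpr hz.1.2.2).ne'
    have ht : ∀ z ∈ twoPointDomain ρ T, 2 * z.2 ≠ 0 := fun z hz =>
      mul_ne_zero two_ne_zero hz.2.1.ne'
    unfold twoPointPenalty slopeBarrier
    fun_prop (disch := assumption)
  exact (hleft.sub hright).sub hpenalty

lemma exists_isMaxOn_twoPointGap (h : IsKompSolNear n ρ T) (hρ : ρ ≤ 1)
    (hM : ∀ x ∈ Ioo 0 ρ, ∀ t ∈ Ioc 0 T, n x t ≤ M) (hδ : 0 < δ) {z₀ : (ℝ × ℝ) × ℝ}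
    (hz₀ : z₀ ∈ twoPointDomain ρ T) (hpos : 0 < twoPointGap n M ρ δ z₀) :
    ∃ z ∈ twoPointDomain ρ T, IsMaxOn (twoPointGap n M ρ δ) (twoPointDomain ρ T) z := by
  have hM₀ : 0 ≤ M :=
    have hx₀ : z₀.1.1 ∈ Ioo 0 ρ := ⟨hz₀.1.1, hz₀.1.2.1.trans_lt hz₀.1.2.2⟩
    (h.nonneg _ hx₀ _ hz₀.2).trans (hM _ hx₀ _ hz₀.2)
  obtain ⟨c, hc, hmargin⟩ := exists_margin_of_twoPointPenalty_slopeBarrier_lt hM₀ hρ hδ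
  let K : Set ((ℝ × ℝ) × ℝ) :=
    ((Icc c (ρ - c) ×ˢ Icc c (ρ - c)) ×ˢ Icc c T) ∩ {z | z.1.1 ≤ z.1.2}
  have hK : IsCompact K := ((isCompact_Icc.prod isCompact_Icc).prod isCompact_Icc).inter_right
    (isClosed_le (by fun_prop) (by fun_prop))
  have hKsub : K ⊆ twoPointDomain ρ T := fun z ⟨⟨⟨hx, hy⟩, ht⟩, hxy⟩ =>
    ⟨⟨hc.trans_le hx.1, hxy, by linarith [hy.2]⟩, hc.trans_le ht.1, ht.2⟩
  have hposK : ∀ z ∈ twoPointDomain ρ T, 0 < twoPointGap n M ρ δ z → z ∈ K := by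
    intro z hz hzpos
    obtain ⟨⟨hx, hxy, hy⟩, ht⟩ := hz
    have hnx := hM z.1.1 ⟨hx, hxy.trans_lt hy⟩ z.2 ht
    have hny := h.nonneg z.1.2 ⟨hx.trans_le hxy, hy⟩ z.2 ht
    obtain ⟨hcx, hcy, hct⟩ := hmargin z.1.1 z.1.2 z.2 hx hxy hy ht.1
      (by unfold twoPointGap at hzpos; linarith)
    exact ⟨⟨⟨⟨hcx.le, by linarith⟩, by linarith, hcy.le⟩, hct.le, ht.2⟩, hxy⟩
  obtain ⟨z, hzK, hzmax⟩ := hK.exists_isMaxOn ⟨z₀, hposK z₀ hz₀ hpos⟩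
    (h.continuousOn_twoPointGap.mono hKsub)
  refine ⟨z, hKsub hzK, fun w hw => ?_⟩
  rcases le_or_gt (twoPointGap n M ρ δ w) 0 with hw₀ | hw₀
  · exact hw₀.trans (hpos.le.trans (hzmax (hposK z₀ hz₀ hpos)))
  · exact hzmax (hposK w hw hw₀)

lemma mul_deriv_slopeBarrier_le_of_isMaxOn (h : IsKompSolNear n ρ T) {x y t : ℝ}
    (hz : ((x, y), t) ∈ twoPointDomain ρ T)
    (hmax : IsMaxOn (twoPointGap n M ρ δ) (twoPointDomain ρ T) ((x, y), t)) :
    (y - x + δ) * deriv (slopeBarrier M ρ y) t ≤ deriv (n x) t - deriv (n y) t := by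
  obtain ⟨⟨hx, hxy, hy⟩, ht⟩ := hz
  have hslice : IsLocalMaxOn (fun s => twoPointGap n M ρ δ ((x, y), s)) (Iic t) t := by
    filter_upwards [self_mem_nhdsWithin, mem_nhdsWithin_of_mem_nhds (lt_mem_nhds ht.1)]
      with s hst hs
    exact hmax (show ((x, y), s) ∈ twoPointDomain ρ T from
      ⟨⟨hx, hxy, hy⟩, hs, (mem_Iic.mp hst).trans ht.2⟩)
  have hnx := (h.differentiableAt_time x ⟨hx, hxy.trans_lt hy⟩ t ht).hasDerivAt
  have hny := (h.differentiableAt_time y ⟨hx.trans_le hxy, hy⟩ t ht).hasDerivAt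
  have hΦ : HasDerivAt (slopeBarrier M ρ y) (deriv (slopeBarrier M ρ y) t) t :=
    (hasDerivAt_slopeBarrier_right ht.1.ne').differentiableAt.hasDerivAt
  have hgap : HasDerivAt (fun s => twoPointGap n M ρ δ ((x, y), s))
      (deriv (n x) t - deriv (n y) t - (y - x + δ) * deriv (slopeBarrier M ρ y) t) t :=
    (hnx.sub hny).sub ((hΦ.const_mul (y - x + δ)).sub_const (δ * log x))
  exact sub_nonneg.mp
    (nonneg_of_hasDerivWithinAt_of_isLocalMaxOn_Iic hgap.hasDerivWithinAt hslice)

lemma isLocalMax_of_isMaxOn_twoPointGap {x y t : ℝ} (hxy : x < y)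
    (hz : ((x, y), t) ∈ twoPointDomain ρ T)
    (hmax : IsMaxOn (twoPointGap n M ρ δ) (twoPointDomain ρ T) ((x, y), t)) :
    IsLocalMax (fun z : ℝ × ℝ => n z.1 t - n z.2 t -
      twoPointPenalty (fun w => slopeBarrier M ρ w t) δ z.1 z.2) (x, y) := by
  have hopen : IsOpen {z : ℝ × ℝ | 0 < z.1 ∧ z.1 < z.2 ∧ z.2 < ρ} :=
    (isOpen_lt continuous_const continuous_fst).inter
      ((isOpen_lt continuous_fst continuous_snd).inter
        (isOpen_lt continuous_snd continuous_const))
  filter_upwards [hopen.mem_nhds ⟨hz.1.1, hxy, hz.1.2.2⟩] with w hw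
  exact hmax (show (w, t) ∈ twoPointDomain ρ T from ⟨⟨hw.1, hw.2.1.le, hw.2.2⟩, hz.2⟩)

lemma twoPointGap_nonpos_of_isMaxOn (h : IsKompSolNear n ρ T) (hρ : ρ ≤ 1 / 2)
    (hM : ∀ x ∈ Ioo 0 ρ, ∀ t ∈ Ioc 0 T, n x t ≤ M) (hδ : 0 < δ) {z : (ℝ × ℝ) × ℝ}
    (hz : z ∈ twoPointDomain ρ T)
    (hmax : IsMaxOn (twoPointGap n M ρ δ) (twoPointDomain ρ T) z) :
    twoPointGap n M ρ δ z ≤ 0 := by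
  obtain ⟨⟨x, y⟩, t⟩ := z
  have hz' := hz
  obtain ⟨⟨hx, hxy, hy⟩, ht⟩ := hz'
  dsimp only at hx hxy hy ht
  have hxρ : x ∈ Ioo 0 ρ := ⟨hx, hxy.trans_lt hy⟩
  have hyρ : y ∈ Ioo 0 ρ := ⟨hx.trans_le hxy, hy⟩
  have hny := h.nonneg y hyρ t ht
  have hM₀ : 0 ≤ M := hny.trans (hM y hyρ t ht)
  have hΦ : 1 ≤ slopeBarrier M ρ y t :=
    one_le_slopeBarrier hM₀ hyρ.1.le hy (hρ.trans (by norm_num)) ht.1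
  by_contra! hpos
  have hxy' : x < y := by
    refine hxy.lt_of_ne fun hdiag => ?_
    have hlog : log x < 0 := log_neg hx (by linarith)
    subst hdiag
    simp only [twoPointGap, twoPointPenalty, sub_self, zero_add] at hpos
    nlinarith
  have hspace := deriv_kompFlux_sub_le_of_isLocalMax hx hxy (hy.le.trans hρ) hδ.le
    (h.twiceDifferentiableAt x hxρ t ht) (h.twiceDifferentiableAt y hyρ t ht)
    (twiceDifferentiableAt_slopeBarrier hy) hΦ (deriv_slopeBarrier_left_nonneg hM₀ hy) hny
    (sub_pos.mp hpos).le (isLocalMax_of_isMaxOn_twoPointGap hxy' hz hmax)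
  have htime := h.mul_deriv_slopeBarrier_le_of_isMaxOn hz hmax
  rw [h.deriv_time_eq x hxρ t ht, h.deriv_time_eq y hyρ t ht] at htime
  have hstrict := slopeBarrier_strict_supersolution hyρ.1.le hy hρ ht.1 hny (hM y hyρ t ht)
  exact (htime.trans hspace).not_gt (mul_lt_mul_of_pos_left hstrict (by linarith))

lemma twoPointGap_nonpos (h : IsKompSolNear n ρ T) (hρ : ρ ≤ 1 / 2)
    (hM : ∀ x ∈ Ioo 0 ρ, ∀ t ∈ Ioc 0 T, n x t ≤ M) (hδ : 0 < δ) {z : (ℝ × ℝ) × ℝ}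
    (hz : z ∈ twoPointDomain ρ T) : twoPointGap n M ρ δ z ≤ 0 := by
  by_contra! hpos
  obtain ⟨z', hz', hmax⟩ := h.exists_isMaxOn_twoPointGap (by linarith) hM hδ hz hpos
  exact (hpos.trans_le (hmax hz)).not_ge (h.twoPointGap_nonpos_of_isMaxOn hρ hM hδ hz' hmax)

theorem sub_le_slopeBarrier_mul (h : IsKompSolNear n ρ T) (hρ : ρ ≤ 1 / 2)
    (hM : ∀ x ∈ Ioo 0 ρ, ∀ t ∈ Ioc 0 T, n x t ≤ M) {x y t : ℝ} (hx : 0 < x) (hxy : x ≤ y)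
    (hy : y < ρ) (ht : t ∈ Ioc 0 T) : n x t - n y t ≤ slopeBarrier M ρ y t * (y - x) := by
  have hlim : Tendsto (fun δ => twoPointPenalty (fun w => slopeBarrier M ρ w t) δ x y) (𝓝[>] 0)
      (𝓝 (slopeBarrier M ρ y t * (y - x))) := by
    refine (Continuous.tendsto' ?_ 0 _ ?_).mono_left nhdsWithin_le_nhds
    · unfold twoPointPenalty
      fun_prop
    · unfold twoPointPenalty
      ring
  refine ge_of_tendsto hlim (eventually_mem_nhdsWithin.mono fun δ hδ => ?_)
  exact sub_nonpos.mp (h.twoPointGap_nonpos hρ hM hδ (z := ((x, y), t)) ⟨⟨hx, hxy, hy⟩, ht⟩)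

end IsKompSolNear

lemma IsKompSolOn.isKompSolNear {n : ℝ → ℝ → ℝ} {n₀ : ℝ → ℝ} {T : ℝ} (h : IsKompSolOn n n₀ T)
    (r : ℝ) : IsKompSolNear n r T where
  nonneg x hx t ht := h.nonneg x t hx.1 ht.1 ht.2
  continuousOn := h.contOn.mono (prod_mono_left Ioo_subset_Ioi_self)
  twiceDifferentiableAt x hx t ht :=
    ⟨(lt_mem_nhds hx.1).mono fun z hz => h.diff_x t ht.1 ht.2 z hz, h.diff_xx t ht.1 ht.2 x hx.1⟩
  differentiableAt_time x hx t ht := h.diff_t x hx.1 t ht.1 ht.2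
  deriv_time_eq x hx t ht := h.pde x hx.1 t ht.1 ht.2

end LocalSolution

theorem boundary_limit_exists_general {n : ℝ → ℝ → ℝ} {r T : ℝ} (hr : 0 < r)
    (hsol : IsKompSolNear n r T)
    (hbdd : ∃ M : ℝ, ∀ x ∈ Ioo 0 r, ∀ t ∈ Ioo 0 T, n x t ≤ M) {t : ℝ} (ht : t ∈ Ioc 0 T) :
    ∃ L : ℝ, Tendsto (fun x => n x t) (𝓝[>] 0) (𝓝 L) := by
  obtain ⟨M, hM⟩ := hbdd
  obtain ⟨ρ, hρ₀, hρr, hρ⟩ : ∃ ρ, 0 < ρ ∧ ρ ≤ r ∧ ρ ≤ 1 / 2 :=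
    ⟨min r (1 / 2), by positivity, min_le_left _ _, min_le_right _ _⟩
  have h := hsol.mono hρr
  have hM' := h.le_of_forall_lt fun x hx => hM x (Ioo_subset_Ioo_right hρr hx)
  have hx₀ : ρ / 2 ∈ Ioo 0 ρ := ⟨half_pos hρ₀, half_lt_self hρ₀⟩
  have hM₀ : 0 ≤ M := (h.nonneg _ hx₀ t ht).trans (hM' _ hx₀ t ht)
  refine exists_tendsto_nhdsGT_of_sub_le hx₀.1 (C := slopeBarrier M ρ (ρ / 2) t)
    (fun x hx => h.nonneg x ⟨hx.1, hx.2.trans hx₀.2⟩ t ht) fun x hx y hy hxy => ?_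
  refine (h.sub_le_slopeBarrier_mul hρ hM' hx.1 hxy (hy.2.trans hx₀.2) ht).trans ?_
  exact mul_le_mul_of_nonneg_right (slopeBarrier_le_slopeBarrier hM₀ hy.2.le hx₀.2)
    (sub_nonneg.mpr hxy)

theorem boundary_limit_exists
    (T : ℝ) (hT : 0 < T) (n : ℝ → ℝ → ℝ) (n₀ : ℝ → ℝ)
    (hsol : IsKompSolOn n n₀ T)
    (hbdd : ∃ M : ℝ, ∀ x t : ℝ, 0 < x → 0 < t → t < T → n x t ≤ M)
    (h0nonneg : ∀ x : ℝ, 0 < x → 0 ≤ n₀ x)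
    (h0bdd : ∃ C : ℝ, ∀ x : ℝ, 0 < x → n₀ x ≤ C)
    (h0decay : Filter.Tendsto (fun x => x ^ 2 * n₀ x) Filter.atTop (nhds 0)) :
    ∀ t : ℝ, 0 < t → t ≤ T →
      ∃ L : ℝ, Filter.Tendsto (fun x => n x t) (𝓝[>] (0:ℝ)) (nhds L) := by
  obtain ⟨M, hM⟩ := hbdd
  exact fun t ht htT => boundary_limit_exists_general one_pos (hsol.isKompSolNear 1)
    ⟨M, fun x hx s hs => hM x s hx.1 hs.1 hs.2⟩ ⟨ht, htT⟩
end
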